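/- Let R be the polynomial ring over ℂ in six variables. Let N be a 2×3 matrix whose entries are homogeneous linear forms in R, let Δ₁, Δ₂, Δ₃ denote its three 2×2 minors, and let L be a homogeneous linear form. Suppose F ∈ R is homogeneous of degree 3 and lies in the ideal generated by Δ₁, Δ₂, Δ₃ and L. Then there exist homogeneous linear forms a₁, a₂, a₃ and a homogeneous quadratic form Q in R such that F = det M + Q·L, where M is the 3×3 matrix whose first row is (a₁, a₂, a₃) and whose second and third rows are the two rows of N. -/

import Mathlib

/-! Expanding `det M` along its first row gives `a₁ Δ₁ - a₂ Δ₂ + a₃ Δ₃`, where the `Δᵢ` are the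
minors of `N`. So an expression `F = a Δ₁ + b Δ₂ + c Δ₃ + d L` already has the required form, except
that `a, b, c, d` need not be homogeneous. As the `Δᵢ` are quadratic and `L` is linear, taking the
degree-3 component replaces `a, b, c` by their degree-1 components and `d` by its degree-2
component (`homogeneousComponent_add_mul_of_isHomogeneous`), and leaves `F` unchanged. -/

open MvPolynomial

attribute [local instance] MvPolynomial.gradedAlgebra in
lemma homogeneousComponent_add_mul_of_isHomogeneous {σ R : Type*} [CommSemiring R]
    {m n : ℕ} (p : MvPolynomial σ R) {q : MvPolynomial σ R} (hq : q.IsHomogeneous n) :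
    homogeneousComponent (m + n) (p * q) = homogeneousComponent m p * q := by
  have h := DirectSum.coe_decompose_mul_add_of_right_mem (homogeneousSubmodule σ R)
    (i := m) (a := p) ((mem_homogeneousSubmodule n q).2 hq)
  exact (decomposition.decompose'_apply _ _).symm.trans
    (h.trans (congrArg (· * q) (decomposition.decompose'_apply p m)))

/-- If a cubic form `F` in six variables lies in the ideal generated by the three `2×2`
minors of a `2×3` matrix `N` of linear forms together with a linear form `L`, then
`F = det M + Q·L` where `M` is a `3×3` matrix of linear forms whose last two rows are
the rows of `N`, and `Q` is a quadratic form. -/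
theorem stmt5 (N : Matrix (Fin 2) (Fin 3) (MvPolynomial (Fin 6) ℂ))
    (hN : ∀ i j, (N i j).IsHomogeneous 1)
    (L F : MvPolynomial (Fin 6) ℂ)
    (hL : L.IsHomogeneous 1) (hF : F.IsHomogeneous 3)
    (hmem : F ∈ Ideal.span
      ({N 0 1 * N 1 2 - N 0 2 * N 1 1,
        N 0 0 * N 1 2 - N 0 2 * N 1 0,
        N 0 0 * N 1 1 - N 0 1 * N 1 0, L} : Set (MvPolynomial (Fin 6) ℂ))) :
    ∃ a₁ a₂ a₃ Q : MvPolynomial (Fin 6) ℂ,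
      a₁.IsHomogeneous 1 ∧ a₂.IsHomogeneous 1 ∧ a₃.IsHomogeneous 1 ∧ Q.IsHomogeneous 2 ∧
      F = (!![a₁, a₂, a₃;
              N 0 0, N 0 1, N 0 2;
              N 1 0, N 1 1, N 1 2]).det + Q * L := by
  simp only [Ideal.mem_span_insert, Ideal.mem_span_singleton'] at hmem
  obtain ⟨a, _, ⟨b, _, ⟨c, _, ⟨d, rfl⟩, rfl⟩, rfl⟩, hFeq⟩ := hmem
  have hΔ (j k : Fin 3) : (N 0 j * N 1 k - N 0 k * N 1 j).IsHomogeneous 2 :=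
    ((hN 0 j).mul (hN 1 k)).sub ((hN 0 k).mul (hN 1 j))
  have hF3 := congrArg (homogeneousComponent (1 + 2)) hFeq
  rw [homogeneousComponent_eq_self hF] at hF3
  simp only [map_add] at hF3
  rw [homogeneousComponent_add_mul_of_isHomogeneous a (hΔ 1 2),
    homogeneousComponent_add_mul_of_isHomogeneous b (hΔ 0 2),
    homogeneousComponent_add_mul_of_isHomogeneous c (hΔ 0 1),
    show 1 + 2 = 2 + 1 from rfl, homogeneousComponent_add_mul_of_isHomogeneous d hL] at hF3
  -- The minus sign is the cofactor sign of the middle entry of the first row.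
  refine ⟨homogeneousComponent 1 a, -homogeneousComponent 1 b, homogeneousComponent 1 c,
    homogeneousComponent 2 d, homogeneousComponent_isHomogeneous 1 a,
    (homogeneousComponent_isHomogeneous 1 b).neg, homogeneousComponent_isHomogeneous 1 c,
    homogeneousComponent_isHomogeneous 2 d, ?_⟩
  rw [hF3, Matrix.det_fin_three]
  simp
  ring
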